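/- For every τ > 0 there exists ρ₀ > 0 such that for every ρ ∈ (0, ρ₀) and every ε ∈ (0, 1] there exists a smooth compactly supported function u₀ : ℝ^N → ℝ with support contained in Ω satisfying u₀ ≥ 0, ∫_{ℝ^N} u₀² dx = ρ, ∫_{ℝ^N} |∇u₀|² dx < τ², and J_ε(u₀) < 0. -/

import Mathlib

open MeasureTheory Set

/-- For every τ > 0 there exists ρ₀ > 0 such that for every ρ ∈ (0, ρ₀) and
every ε ∈ (0, 1] there exists a smooth compactly supported nonnegative function u₀ supported
in Ω with ∫ u₀² = ρ, ∫ |∇u₀|² < τ², and J_ε(u₀) < 0. -/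
theorem stmt_4 (N : ℕ) (hN : 3 ≤ N)
    (Ω : Set (EuclideanSpace ℝ (Fin N))) (hΩne : Ω.Nonempty) (hΩopen : IsOpen Ω)
    (hΩbdd : Bornology.IsBounded Ω)
    (r : ℝ) (hr0 : 0 < r) (hr1 : r < 1)
    (p : ℝ) (hp1 : 2 + 4 / (N : ℝ) < p) (hp2 : p < 2 * N / ((N : ℝ) - 2)) :
    ∀ τ > (0 : ℝ), ∃ ρ₀ > (0 : ℝ),
      ∀ ρ ∈ Ioo (0 : ℝ) ρ₀, ∀ ε ∈ Ioc (0 : ℝ) 1,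
        ∃ u₀ : EuclideanSpace ℝ (Fin N) → ℝ,
          ContDiff ℝ (⊤ : ℕ∞) u₀ ∧ HasCompactSupport u₀ ∧ tsupport u₀ ⊆ Ω ∧
          (∀ x, 0 ≤ u₀ x) ∧
          (∫ x, (u₀ x) ^ 2) = ρ ∧
          (∫ x, ‖fderiv ℝ u₀ x‖ ^ 2) < τ ^ 2 ∧
          (1 / 2) * (∫ x, ‖fderiv ℝ u₀ x‖ ^ 2)
              - (1 / (1 - r)) * (∫ x in Ω, (u₀ x + ε) ^ (1 - r))
              - (1 / p) * (∫ x, (u₀ x) ^ p) < 0 := by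
  obtain ⟨x₀, hx₀⟩ := hΩne
  obtain ⟨R, hR, hRΩ⟩ := Metric.nhds_basis_closedBall.mem_iff.1 (hΩopen.mem_nhds hx₀)
  let φ : ContDiffBump x₀ := ⟨R / 2, R, by positivity, by linarith⟩
  have hφc : Continuous (fun x => φ x) := φ.continuous
  have hφ0 : ∀ x, 0 ≤ φ x := fun x => φ.nonneg
  have hφcs : HasCompactSupport (fun x => φ x) := φ.hasCompactSupport
  have hφts : tsupport (fun x => φ x) ⊆ Ω := by
    have h : tsupport (fun x => φ x) = Metric.closedBall x₀ R := φ.tsupport_eq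
    rw [h]; exact hRΩ
  have hφ1 : φ x₀ = 1 := φ.one_of_mem_closedBall (Metric.mem_closedBall_self (by positivity))
  have hs : 0 < 1 - r := by linarith
  have hp0 : 0 < p := by
    have : (0 : ℝ) ≤ 4 / (N : ℝ) := by positivity
    linarith
  have hA : 0 < ∫ x, (φ x) ^ 2 := by
    refine Continuous.integral_pos_of_hasCompactSupport_nonneg_nonzero (x := x₀)
      (hφc.pow 2) ?_ (fun x => by positivity) (by simp [hφ1])
    exact hφcs.comp_left (g := fun y : ℝ => y ^ 2) (by simp)
  have hC : 0 < ∫ x in Ω, (φ x) ^ (1 - r) := by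
    rw [setIntegral_eq_integral_of_forall_compl_eq_zero]
    · refine Continuous.integral_pos_of_hasCompactSupport_nonneg_nonzero (x := x₀)
        (hφc.rpow_const (fun x => Or.inr hs.le)) ?_
        (fun x => Real.rpow_nonneg (hφ0 x) _) (by simp [hφ1])
      exact hφcs.comp_left (g := fun y : ℝ => y ^ (1 - r)) (Real.zero_rpow hs.ne')
    · intro x hx
      have : φ x = 0 := image_eq_zero_of_notMem_tsupport (fun h => hx (hφts h))
      rw [this, Real.zero_rpow hs.ne']
  have hB : 0 ≤ ∫ x, ‖fderiv ℝ (fun x => φ x) x‖ ^ 2 :=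
    integral_nonneg (fun x => by positivity)
  set A := ∫ x, (φ x) ^ 2 with hAdef
  set B := ∫ x, ‖fderiv ℝ (fun x => φ x) x‖ ^ 2 with hBdef
  set C := ∫ x in Ω, (φ x) ^ (1 - r) with hCdef
  intro τ hτ
  set δ : ℝ := min 1 (min (τ ^ 2 / (B + 1)) (C / (B + 1))) with hδ
  have hδ0 : 0 < δ := by
    refine lt_min one_pos (lt_min ?_ ?_) <;> positivity
  refine ⟨A * δ ^ 2, by positivity, ?_⟩
  rintro ρ ⟨hρ0, hρ1⟩ ε ⟨hε0, hε1⟩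
  set t := Real.sqrt (ρ / A) with ht
  have ht0 : 0 < t := Real.sqrt_pos.2 (by positivity)
  have ht2 : t ^ 2 = ρ / A := Real.sq_sqrt (by positivity)
  have htδ : t < δ := by
    refine lt_of_pow_lt_pow_left₀ 2 hδ0.le ?_
    rw [ht2, div_lt_iff₀ hA]; linarith
  have ht1 : t < 1 := htδ.trans_le (min_le_left _ _)
  have htB1 : t * B < τ ^ 2 := by
    have h : t < τ ^ 2 / (B + 1) :=
      htδ.trans_le ((min_le_right _ _).trans (min_le_left _ _))
    rw [lt_div_iff₀ (by positivity)] at h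
    nlinarith
  have htB2 : t * B < C := by
    have h : t < C / (B + 1) :=
      htδ.trans_le ((min_le_right _ _).trans (min_le_right _ _))
    rw [lt_div_iff₀ (by positivity)] at h
    nlinarith
  have hφd : ContDiff ℝ (⊤ : ℕ∞) (fun x => φ x) := φ.contDiff
  have hgrad : (∫ x, ‖fderiv ℝ (fun x => t * φ x) x‖ ^ 2) = t ^ 2 * B := by
    rw [hBdef, ← integral_const_mul]
    congr 1
    ext x
    rw [fderiv_const_mul (hφd.differentiable (by simp) x), norm_smul, mul_pow,
      Real.norm_eq_abs, sq_abs]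
  have hsub : tsupport (fun x => t * φ x) ⊆ Ω :=
    (tsupport_mul_subset_right (f := fun _ => t) (g := fun x => φ x)).trans hφts
  have htsqB : t ^ 2 * B ≤ t * B := by
    have : t ^ 2 ≤ t := by nlinarith
    exact mul_le_mul_of_nonneg_right this hB
  refine ⟨fun x => t * φ x, contDiff_const.mul hφd, hφcs.mul_left, hsub,
    fun x => mul_nonneg ht0.le (hφ0 x), ?_, ?_, ?_⟩
  · simp only [mul_pow]
    rw [integral_const_mul, ht2, ← hAdef]
    field_simp
  · rw [hgrad]; linarith
  · rw [hgrad]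
    have hfin : volume Ω < ⊤ := hΩbdd.measure_lt_top
    have hint : ∀ e : ℝ, 0 ≤ e → e ≤ 1 →
        IntegrableOn (fun x => (t * φ x + e) ^ (1 - r)) Ω := by
      intro e he he1
      have hc : Continuous (fun x => (t * φ x + e) ^ (1 - r)) :=
        ((continuous_const.mul hφc).add continuous_const).rpow_const (fun x => Or.inr hs.le)
      refine Measure.integrableOn_of_bounded (M := (2 : ℝ) ^ (1 - r)) hfin.ne
        hc.aestronglyMeasurable (Filter.Eventually.of_forall fun x => ?_)
      have h0 : 0 ≤ t * φ x := mul_nonneg ht0.le (hφ0 x)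
      have h1 : t * φ x ≤ 1 := mul_le_one₀ ht1.le (hφ0 x) φ.le_one
      rw [Real.norm_of_nonneg (Real.rpow_nonneg (by linarith) _)]
      exact Real.rpow_le_rpow (by linarith) (by linarith) hs.le
    have hlow : t ^ (1 - r) * C ≤ ∫ x in Ω, (t * φ x + ε) ^ (1 - r) := by
      have e : t ^ (1 - r) * C = ∫ x in Ω, (t * φ x + 0) ^ (1 - r) := by
        rw [hCdef, ← integral_const_mul]
        congr 1
        ext x
        rw [add_zero, Real.mul_rpow ht0.le (hφ0 x)]
      rw [e]
      refine integral_mono (hint 0 le_rfl zero_le_one) (hint ε hε0.le hε1) (fun x => ?_)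
      have h0 : 0 ≤ t * φ x := mul_nonneg ht0.le (hφ0 x)
      exact Real.rpow_le_rpow (by linarith) (by linarith) hs.le
    have hpint : 0 ≤ (1 / p) * ∫ x, (t * φ x) ^ p :=
      mul_nonneg (by positivity)
        (integral_nonneg fun x => Real.rpow_nonneg (mul_nonneg ht0.le (hφ0 x)) _)
    have htt : t ≤ t ^ (1 - r) := by
      simpa using Real.rpow_le_rpow_of_exponent_ge ht0 ht1.le (by linarith : 1 - r ≤ 1)
    have h1 : t * (t * B) < t ^ (1 - r) * C :=
      (mul_lt_mul_of_pos_left htB2 ht0).trans_le (mul_le_mul_of_nonneg_right htt hC.le)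
    have h2 : 1 ≤ 1 / (1 - r) := by
      rw [le_div_iff₀ hs]; linarith
    have h3 : t ^ (1 - r) * C ≤ (1 / (1 - r)) * ∫ x in Ω, (t * φ x + ε) ^ (1 - r) := by
      have h4 : 0 < t ^ (1 - r) * C := mul_pos (Real.rpow_pos_of_pos ht0 _) hC
      nlinarith
    have h5 : 0 ≤ t ^ 2 * B := by positivity
    nlinarith
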